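/- A density matrix ρ on ℂ² ⊗ ℂ² is separable if and only if ρ¹ ⊗ I₂ − ρ is positive semidefinite, where ρ¹ is the partial trace of ρ over the second factor and I₂ is the 2×2 identity (the reduction criterion for two qubits). -/

import Mathlib

open scoped ComplexOrder Kronecker

noncomputable section

/-- A density matrix: positive semidefinite with trace one. -/
def IsDensity {ι : Type*} [Fintype ι] (ρ : Matrix ι ι ℂ) : Prop :=
  ρ.PosSemidef ∧ ρ.trace = 1

/-- A separable state: a finite convex combination of tensor products of density
matrices; a non-separable density matrix is entangled. -/
def Separable {m n : ℕ} (ρ : Matrix (Fin m × Fin n) (Fin m × Fin n) ℂ) : Prop :=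
  ∃ (k : ℕ) (lam : Fin k → ℝ) (ρ1 : Fin k → Matrix (Fin m) (Fin m) ℂ)
    (ρ2 : Fin k → Matrix (Fin n) (Fin n) ℂ),
    (∀ i, 0 ≤ lam i) ∧ (∑ i, lam i = 1) ∧
    (∀ i, IsDensity (ρ1 i)) ∧ (∀ i, IsDensity (ρ2 i)) ∧
    ρ = ∑ i, (lam i : ℂ) • (ρ1 i ⊗ₖ ρ2 i)

/-- The partial trace over the second tensor factor. -/
def ptrace2 {m n : ℕ} (ρ : Matrix (Fin m × Fin n) (Fin m × Fin n) ℂ) :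
    Matrix (Fin m) (Fin m) ℂ :=
  Matrix.of fun i j => ∑ k, ρ (i, k) (j, k)

/-!
Let `ρ¹` be the first marginal of `ρ`. On a qubit, `tr X • 1 - X` is the adjugate of `X`, which is
unitarily equivalent to `Xᵀ`; hence `ρ¹ ⊗ 1 - ρ` is positive semidefinite iff the partial transpose
of `ρ` is. It remains to see that a two-qubit state `ρ = [A, B; Bᴴ, C]` with positive partial
transpose `[A, Bᴴ; B, C]` is separable. Note that conjugation by `1 ⊗ G` and adding a positive
semidefinite matrix to `C` both preserve separability.

If `A` is singular, then `B` and `Bᴴ` vanish on its kernel, so `B = z • A` and `ρ` is a sum of two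
products. Otherwise one may take `A = 1`. If moreover `B` is Hermitian, one may take `C = B²`, and
diagonalising `B` writes `ρ` as a sum of products. By exchanging the two qubits, `ρ` is therefore
separable whenever `A`, `B` and `C` are symmetric.

For `A = 1` and general `B`, a unitary conjugation makes `B` symmetric. Then `BᴴB` and `BBᴴ` are
transposes of each other, so their off-diagonal entries have opposite imaginary parts. After
replacing `ρ` by its partial transpose if necessary, the segment from `BᴴB` to `C` contains a
symmetric matrix `S`, the state `[1, B; Bᴴ, S]` is separable by the symmetric case, and `C - S` is
positive semidefinite.
-/

open Matrix

section SeparableCone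

variable {m n : Type*} [Fintype m] [Fintype n]

/-- The convex cone generated by the product states, that is, the unnormalised separable states. -/
def sepCone (m n : Type*) [Fintype m] [Fintype n] :
    PointedCone ℝ (Matrix (m × n) (m × n) ℂ) :=
  PointedCone.hull ℝ (Set.image2 (· ⊗ₖ ·) {P | IsDensity P} {Q | IsDensity Q})

lemma exists_eq_smul_isDensity {P : Matrix m m ℂ} (hP : P.PosSemidef) (h0 : P ≠ 0) :
    ∃ (t : ℝ) (D : Matrix m m ℂ), 0 ≤ t ∧ IsDensity D ∧ P = t • D := by
  have htr : ((P.trace.re : ℝ) : ℂ) = P.trace := Complex.conj_eq_iff_re.1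
    (Complex.conj_eq_iff_im.2 (Complex.nonneg_iff.1 hP.trace_nonneg).2.symm)
  have hne : P.trace ≠ 0 := mt hP.trace_eq_zero_iff.1 h0
  refine ⟨P.trace.re, P.trace⁻¹ • P, (Complex.nonneg_iff.1 hP.trace_nonneg).1,
    ⟨hP.smul (inv_nonneg.2 hP.trace_nonneg), by simp [hne]⟩, ?_⟩
  rw [← Complex.coe_smul, htr, smul_inv_smul₀ hne]

lemma kronecker_mem_sepCone {P : Matrix m m ℂ} {Q : Matrix n n ℂ}
    (hP : P.PosSemidef) (hQ : Q.PosSemidef) : P ⊗ₖ Q ∈ sepCone m n := by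
  by_cases hP0 : P = 0
  · simp [hP0]
  by_cases hQ0 : Q = 0
  · simp [hQ0]
  obtain ⟨s, D, hs, hD, rfl⟩ := exists_eq_smul_isDensity hP hP0
  obtain ⟨t, E, ht, hE, rfl⟩ := exists_eq_smul_isDensity hQ hQ0
  rw [smul_kronecker, kronecker_smul]
  exact PointedCone.smul_mem _ hs <| PointedCone.smul_mem _ ht <|
    PointedCone.subset_hull <| Set.mem_image2_of_mem hD hE

lemma map_mem_of_mem_sepCone {E : Type*} [AddCommGroup E] [Module ℝ E]
    {K : PointedCone ℝ E} (f : Matrix (m × n) (m × n) ℂ →ₗ[ℝ] E)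
    (hf : ∀ P Q, P.PosSemidef → Q.PosSemidef → f (P ⊗ₖ Q) ∈ K)
    {ρ : Matrix (m × n) (m × n) ℂ} (hρ : ρ ∈ sepCone m n) : f ρ ∈ K := by
  suffices sepCone m n ≤ K.comap f from this hρ
  refine Submodule.span_le.2 ?_
  rintro _ ⟨P, hP, Q, hQ, rfl⟩
  exact hf P Q hP.1 hQ.1

lemma conj_mem_sepCone {ρ : Matrix (m × n) (m × n) ℂ} (hρ : ρ ∈ sepCone m n)
    (X : Matrix m m ℂ) (Y : Matrix n n ℂ) : (X ⊗ₖ Y) * ρ * (X ⊗ₖ Y)ᴴ ∈ sepCone m n := by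
  refine map_mem_of_mem_sepCone
    (LinearMap.mulLeftRight ℝ (X ⊗ₖ Y, (X ⊗ₖ Y)ᴴ)) (fun P Q hP hQ ↦ ?_) hρ
  rw [LinearMap.mulLeftRight_apply, conjTranspose_kronecker, ← mul_kronecker_mul,
    ← mul_kronecker_mul]
  exact kronecker_mem_sepCone (hP.mul_mul_conjTranspose_same X) (hQ.mul_mul_conjTranspose_same Y)

lemma mem_sepCone_of_conj [DecidableEq m] [DecidableEq n] {G : Matrix n n ℂ} (hG : IsUnit G)
    {ρ : Matrix (m × n) (m × n) ℂ}
    (h : (1 ⊗ₖ G) * ρ * (1 ⊗ₖ G)ᴴ ∈ sepCone m n) : ρ ∈ sepCone m n := by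
  obtain ⟨G, rfl⟩ := hG
  convert conj_mem_sepCone h 1 (↑G⁻¹ : Matrix n n ℂ) using 1
  have hinv : ((1 : Matrix m m ℂ) ⊗ₖ (↑G⁻¹ : Matrix n n ℂ)) * (1 ⊗ₖ ↑G) = 1 := by
    rw [← mul_kronecker_mul, Units.inv_mul, Matrix.one_mul, one_kronecker_one]
  have hinv' := congrArg conjTranspose hinv
  rw [conjTranspose_mul, conjTranspose_one] at hinv'
  simp only [← Matrix.mul_assoc, hinv, Matrix.one_mul]
  rw [Matrix.mul_assoc, hinv', Matrix.mul_one]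

lemma submatrix_swap_mem_sepCone {ρ : Matrix (m × n) (m × n) ℂ} (hρ : ρ ∈ sepCone m n) :
    ρ.submatrix Prod.swap Prod.swap ∈ sepCone n m := by
  refine map_mem_of_mem_sepCone
    (reindexLinearEquiv ℝ ℂ (.prodComm m n) (.prodComm m n)).toLinearMap (fun P Q hP hQ ↦ ?_) hρ
  convert kronecker_mem_sepCone hQ hP using 1
  ext ⟨k, i⟩ ⟨l, j⟩
  exact mul_comm _ _

lemma posSemidef_of_mem_sepCone {ρ : Matrix (m × n) (m × n) ℂ} (hρ : ρ ∈ sepCone m n) :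
    ρ.PosSemidef := by
  induction hρ using Submodule.span_induction with
  | mem _ h =>
    obtain ⟨P, hP, Q, hQ, rfl⟩ := h
    exact hP.1.kronecker hQ.1
  | zero => exact .zero
  | add _ _ _ _ hρ hσ => exact hρ.add hσ
  | smul t _ _ hρ =>
    exact hρ.smul t.2

theorem separable_iff_mem_sepCone {m n : ℕ} {ρ : Matrix (Fin m × Fin n) (Fin m × Fin n) ℂ}
    (hρ : ρ.trace = 1) : Separable ρ ↔ ρ ∈ sepCone (Fin m) (Fin n) := by
  constructor
  · rintro ⟨k, lam, P, Q, hlam, -, hP, hQ, rfl⟩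
    refine Submodule.sum_mem _ fun i _ ↦ ?_
    rw [Complex.coe_smul]
    exact PointedCone.smul_mem _ (hlam i) (kronecker_mem_sepCone (hP i).1 (hQ i).1)
  · intro h
    obtain ⟨k, c, g, rfl⟩ := Submodule.mem_span_set'.1 h
    choose P hP Q hQ hPQ using fun i ↦ (g i).2
    have hsum : ∑ i, c i • (g i : Matrix (Fin m × Fin n) (Fin m × Fin n) ℂ) =
        ∑ i, ((c i : ℝ) : ℂ) • (P i ⊗ₖ Q i) :=
      Finset.sum_congr rfl fun i _ ↦ by rw [← hPQ, Complex.coe_smul]; rfl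
    refine ⟨k, fun i ↦ c i, P, Q, fun i ↦ (c i).2, ?_, hP, hQ, hsum⟩
    rw [hsum] at hρ
    simp only [trace_sum, trace_smul, trace_kronecker, (hP _).2, (hQ _).2, smul_eq_mul,
      mul_one] at hρ
    exact_mod_cast hρ

end SeparableCone

section PartialTranspose

variable {m n : Type*}

/-- The partial transpose of a bipartite matrix with respect to the first tensor factor. -/
def partialTranspose (ρ : Matrix (m × n) (m × n) ℂ) : Matrix (m × n) (m × n) ℂ :=
  of fun p q ↦ ρ (q.1, p.2) (p.1, q.2)

lemma partialTranspose_mem_sepCone [Fintype m] [Fintype n] {ρ : Matrix (m × n) (m × n) ℂ}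
    (hρ : ρ ∈ sepCone m n) : partialTranspose ρ ∈ sepCone m n :=
  map_mem_of_mem_sepCone ⟨⟨partialTranspose, fun _ _ ↦ rfl⟩, fun _ _ ↦ rfl⟩
    (fun _ _ hP hQ ↦ kronecker_mem_sepCone hP.transpose hQ) hρ

/-- The matrix `iσ_y`, which conjugates `tr X • 1 - X`, the adjugate of a `2 × 2` matrix `X`,
into `Xᵀ`. -/
def spinFlip : Matrix (Fin 2) (Fin 2) ℂ := !![0, 1; -1, 0]

lemma isUnit_spinFlip : IsUnit spinFlip := by
  rw [isUnit_iff_isUnit_det]; simp [spinFlip]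

lemma spinFlip_conj_reduction {m : ℕ} (ρ : Matrix (Fin m × Fin 2) (Fin m × Fin 2) ℂ) :
    (1 ⊗ₖ spinFlip) * (ptrace2 ρ ⊗ₖ (1 : Matrix (Fin 2) (Fin 2) ℂ) - ρ) * star (1 ⊗ₖ spinFlip) =
      (partialTranspose ρ)ᵀ := by
  ext ⟨i, k⟩ ⟨j, l⟩
  fin_cases k <;> fin_cases l <;>
    simp [spinFlip, ptrace2, partialTranspose, Matrix.mul_apply, Fintype.sum_prod_type,
      star_apply, Matrix.one_apply, apply_ite]

theorem posSemidef_reduction_iff {m : ℕ} (ρ : Matrix (Fin m × Fin 2) (Fin m × Fin 2) ℂ) :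
    (ptrace2 ρ ⊗ₖ (1 : Matrix (Fin 2) (Fin 2) ℂ) - ρ).PosSemidef ↔
      (partialTranspose ρ).PosSemidef := by
  have hU : IsUnit ((1 : Matrix (Fin m) (Fin m) ℂ) ⊗ₖ spinFlip) :=
    isUnit_one.kronecker isUnit_spinFlip
  rw [← hU.posSemidef_star_right_conjugate_iff, spinFlip_conj_reduction, posSemidef_transpose_iff]

end PartialTranspose

section HermBlocks

variable {n : Type*}

/-- The block matrix `[A, B; Bᴴ, C]` as an operator on `ℂ² ⊗ ℂⁿ` whose block index is the first
tensor factor; every Hermitian operator on `ℂ² ⊗ ℂⁿ` has this form. -/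
def hermBlocks (A B C : Matrix n n ℂ) : Matrix (Fin 2 × n) (Fin 2 × n) ℂ :=
  comp _ _ _ _ _ !![A, B; Bᴴ, C]

lemma eq_hermBlocks_of_isHermitian {ρ : Matrix (Fin 2 × n) (Fin 2 × n) ℂ} (hρ : ρ.IsHermitian) :
    ρ = hermBlocks (ρ.submatrix (0, ·) (0, ·)) (ρ.submatrix (0, ·) (1, ·))
      (ρ.submatrix (1, ·) (1, ·)) := by
  ext ⟨i, k⟩ ⟨j, l⟩
  fin_cases i <;> fin_cases j <;> simp [hermBlocks, ← hρ.apply (1, _) (0, _)]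

lemma partialTranspose_hermBlocks (A B C : Matrix n n ℂ) :
    partialTranspose (hermBlocks A B C) = hermBlocks A Bᴴ C := by
  ext ⟨i, k⟩ ⟨j, l⟩
  fin_cases i <;> fin_cases j <;> simp [hermBlocks, partialTranspose]

lemma hermBlocks_eq_submatrix_fromBlocks (A B C : Matrix n n ℂ) :
    ∃ e : Fin 2 × n ≃ n ⊕ n, hermBlocks A B C = (fromBlocks A B Bᴴ C).submatrix e e := by
  refine ⟨(finTwoEquiv.prodCongr (.refl n)).trans (Equiv.boolProdEquivSum n), ?_⟩
  ext ⟨i, k⟩ ⟨j, l⟩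
  fin_cases i <;> fin_cases j <;> simp [hermBlocks, finTwoEquiv]

lemma posSemidef_hermBlocks_iff_fromBlocks {A B C : Matrix n n ℂ} :
    (hermBlocks A B C).PosSemidef ↔ (fromBlocks A B Bᴴ C).PosSemidef := by
  obtain ⟨e, he⟩ := hermBlocks_eq_submatrix_fromBlocks A B C
  rw [he, posSemidef_submatrix_equiv]

variable [Fintype n]

lemma hermBlocks_conj (G A B C : Matrix n n ℂ) :
    (1 ⊗ₖ G) * hermBlocks A B C * (1 ⊗ₖ G)ᴴ =
      hermBlocks (G * A * Gᴴ) (G * B * Gᴴ) (G * C * Gᴴ) := by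
  have hB : (G * B * Gᴴ)ᴴ = G * Bᴴ * Gᴴ := by simp [Matrix.mul_assoc]
  ext ⟨i, k⟩ ⟨j, l⟩
  fin_cases i <;> fin_cases j <;>
    simp [hermBlocks, hB, Matrix.mul_apply, Fintype.sum_prod_type, Matrix.one_apply, apply_ite]

lemma posSemidef_hermBlocks_one_iff [DecidableEq n] {B C : Matrix n n ℂ} :
    (hermBlocks 1 B C).PosSemidef ↔ (C - Bᴴ * B).PosSemidef := by
  have := invertibleOne (α := Matrix n n ℂ)
  rw [posSemidef_hermBlocks_iff_fromBlocks, PosDef.one.fromBlocks₁₁, inv_one, Matrix.mul_one]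

lemma mulVec_eq_zero_of_posSemidef_hermBlocks {A B C : Matrix n n ℂ}
    (h : (hermBlocks A B C).PosSemidef) {v : n → ℂ} (hv : A *ᵥ v = 0) : Bᴴ *ᵥ v = 0 := by
  have hker : fromBlocks A B Bᴴ C *ᵥ Sum.elim v 0 = 0 :=
    ((posSemidef_hermBlocks_iff_fromBlocks.1 h).dotProduct_mulVec_zero_iff _).1
      (by simp [fromBlocks_mulVec, hv, dotProduct, Fintype.sum_sum_type])
  ext i
  simpa [fromBlocks_mulVec] using congrFun hker (Sum.inr i)

lemma hermBlocks_mem_sepCone_of_posSemidef_sub {A B C D : Matrix n n ℂ}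
    (h : hermBlocks A B D ∈ sepCone (Fin 2) n) (hCD : (C - D).PosSemidef) :
    hermBlocks A B C ∈ sepCone (Fin 2) n := by
  have hE : (diagonal ![0, 1] : Matrix (Fin 2) (Fin 2) ℂ).PosSemidef :=
    .diagonal fun i ↦ by fin_cases i <;> simp
  convert add_mem h (kronecker_mem_sepCone hE hCD) using 1
  ext ⟨i, k⟩ ⟨j, l⟩
  fin_cases i <;> fin_cases j <;> simp [hermBlocks]

lemma exists_isUnit_conj_eq_one [DecidableEq n] {A : Matrix n n ℂ} (hA : A.PosDef) :
    ∃ G : Matrix n n ℂ, IsUnit G ∧ G * A * Gᴴ = 1 := by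
  open MatrixOrder in
  obtain ⟨y, hy, rfl⟩ :=
    CStarAlgebra.isStrictlyPositive_iff_eq_star_mul_self.1 hA.isStrictlyPositive
  obtain ⟨y, rfl⟩ := hy
  refine ⟨star ↑y⁻¹, y⁻¹.isUnit.star, ?_⟩
  rw [← star_eq_conjTranspose, star_star, ← Matrix.mul_assoc, ← star_mul, Units.mul_inv, star_one,
    Matrix.one_mul, Units.mul_inv]

end HermBlocks

section ProductBlocks

variable {n : Type*} [Fintype n]

lemma hermBlocks_smul_smul_mem_sepCone {A : Matrix n n ℂ} (hA : A.PosSemidef) (z : ℂ) :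
    hermBlocks A (z • A) ((star z * z) • A) ∈ sepCone (Fin 2) n := by
  convert kronecker_mem_sepCone (posSemidef_vecMulVec_self_star ![1, star z]) hA using 1
  ext ⟨i, k⟩ ⟨j, l⟩
  fin_cases i <;> fin_cases j <;> simp [hermBlocks, hA.1.eq, -cons_vecMulVec, vecMulVec_apply]

lemma hermBlocks_smul_mem_sepCone {A C : Matrix n n ℂ} {z : ℂ}
    (h : (hermBlocks A (z • A) C).PosSemidef) :
    hermBlocks A (z • A) C ∈ sepCone (Fin 2) n := by
  classical
  have hA : A.PosSemidef := h.submatrix (0, ·)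
  refine hermBlocks_mem_sepCone_of_posSemidef_sub (hermBlocks_smul_smul_mem_sepCone hA z) ?_
  have hconj := (posSemidef_hermBlocks_iff_fromBlocks.1 h).mul_mul_conjTranspose_same
    (fromCols (-star z • (1 : Matrix n n ℂ)) (1 : Matrix n n ℂ))
  convert hconj using 1
  rw [conjTranspose_fromCols_eq_fromRows_conjTranspose, fromCols_mul_fromBlocks,
    fromCols_mul_fromRows]
  simp only [conjTranspose_smul, conjTranspose_one, hA.1.eq, star_neg, star_star,
    Matrix.smul_mul, Matrix.mul_smul, Matrix.one_mul, Matrix.mul_one]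
  module

lemma hermBlocks_one_sq_mem_sepCone [DecidableEq n] {H : Matrix n n ℂ}
    (hH : H.IsHermitian) : hermBlocks 1 H (H * H) ∈ sepCone (Fin 2) n := by
  let U : Matrix n n ℂ := hH.eigenvectorUnitary
  let Λ : Matrix n n ℂ := diagonal fun i ↦ (hH.eigenvalues i : ℂ)
  have hU : U * Uᴴ = 1 := Unitary.coe_mul_star_self _
  have hU' : Uᴴ * U = 1 := Unitary.coe_star_mul_self _
  have hspec : H = U * Λ * Uᴴ := hH.spectral_theorem
  have hconj : (1 ⊗ₖ U) * hermBlocks 1 Λ (Λ * Λ) * (1 ⊗ₖ U)ᴴ = hermBlocks 1 H (H * H) := by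
    rw [hermBlocks_conj, hspec]
    congr 1
    · rw [Matrix.mul_one, hU]
    · simp only [Matrix.mul_assoc, ← Matrix.mul_assoc Uᴴ U, hU', Matrix.one_mul]
  have hdiag : hermBlocks 1 Λ (Λ * Λ) = ∑ i, hermBlocks (single i i 1)
      ((hH.eigenvalues i : ℂ) • single i i 1)
      ((star (hH.eigenvalues i : ℂ) * hH.eigenvalues i) • single i i 1) := by
    ext ⟨a, k⟩ ⟨b, l⟩
    by_cases hkl : k = l
    · subst hkl
      fin_cases a <;> fin_cases b <;> simp [hermBlocks, Λ, Matrix.sum_apply, single_apply]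
    · have hne (i : n) : ¬ (i = k ∧ i = l) := fun h ↦ hkl (h.1.symm.trans h.2)
      fin_cases a <;> fin_cases b <;>
        simp [hermBlocks, Λ, Matrix.sum_apply, hkl, hne]
  rw [← hconj, hdiag]
  refine conj_mem_sepCone (Submodule.sum_mem _ fun i _ ↦
    hermBlocks_smul_smul_mem_sepCone ?_ _) 1 U
  rw [← diagonal_single]
  exact .diagonal (Pi.single_nonneg.2 zero_le_one)

lemma hermBlocks_mem_sepCone_of_posDef_of_isHermitian
    {A H C : Matrix n n ℂ} (hA : A.PosDef) (hH : H.IsHermitian)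
    (h : (hermBlocks A H C).PosSemidef) : hermBlocks A H C ∈ sepCone (Fin 2) n := by
  classical
  obtain ⟨G, hG, hGA⟩ := exists_isUnit_conj_eq_one hA
  have hconj := h.mul_mul_conjTranspose_same ((1 : Matrix (Fin 2) (Fin 2) ℂ) ⊗ₖ G)
  refine mem_sepCone_of_conj hG ?_
  rw [hermBlocks_conj, hGA] at hconj ⊢
  have hH' := isHermitian_mul_mul_conjTranspose G hH
  rw [posSemidef_hermBlocks_one_iff, hH'.eq] at hconj
  exact hermBlocks_mem_sepCone_of_posSemidef_sub (hermBlocks_one_sq_mem_sepCone hH') hconj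

end ProductBlocks

section TwoByTwo

lemma smul_eq_trace_smul_adjugate {X : Matrix (Fin 2) (Fin 2) ℂ} {v : Fin 2 → ℂ}
    (hv : X *ᵥ v = 0) (hv' : Xᴴ *ᵥ v = 0) :
    (star v ⬝ᵥ v) • X = X.trace • (vecMulVec v (star v)).adjugate := by
  have h (i) : X i 0 * v 0 + X i 1 * v 1 = 0 := by
    simpa [mulVec, dotProduct] using congrFun hv i
  have h' (j) : X 0 j * star (v 0) + X 1 j * star (v 1) = 0 := by
    simpa [mulVec, dotProduct] using congrArg star (congrFun hv' j)
  ext i j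
  fin_cases i <;> fin_cases j <;>
    simp only [adjugate_fin_two, vecMulVec_apply, trace_fin_two, dotProduct, Fin.sum_univ_two,
      Pi.star_apply, Matrix.smul_apply, smul_eq_mul, of_apply, cons_val', cons_val_zero,
      cons_val_one, cons_val_fin_one, Fin.zero_eta, Fin.mk_one]
  · linear_combination star (v 0) * h 0 - v 1 * h' 1
  · linear_combination v 0 * h' 1 + star (v 1) * h 0
  · linear_combination star (v 0) * h 1 + v 1 * h' 0
  · linear_combination v 1 * h' 1 - star (v 0) * h 0

lemma exists_isSymm_between {P C : Matrix (Fin 2) (Fin 2) ℂ} (hP : P.IsHermitian)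
    (hC : C.IsHermitian) (him : (P 0 1).im * (C 0 1).im ≤ 0) :
    ∃ s t : ℝ, 0 ≤ s ∧ 0 ≤ t ∧ s + t = 1 ∧ (s • P + t • C).IsSymm := by
  have h0 : (0 : ℝ) ∈ segment ℝ (P 0 1).im (C 0 1).im := by
    rw [segment_eq_uIcc, Set.mem_uIcc]
    rcases mul_nonpos_iff.1 him with h | h
    · exact .inr h.symm
    · exact .inl h
  obtain ⟨s, t, hs, ht, hst, h0⟩ := h0
  refine ⟨s, t, hs, ht, hst, ?_⟩
  have hPC := (hP.smul (IsSelfAdjoint.all s)).add (hC.smul (IsSelfAdjoint.all t))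
  have hreal : star ((s • P + t • C) 0 1) = (s • P + t • C) 0 1 := by
    rw [← starRingEnd_apply, Complex.conj_eq_iff_im]
    simpa using h0
  rw [hPC.apply] at hreal
  ext i j
  fin_cases i <;> fin_cases j <;> simp_all

lemma exists_isHermitian_trace_mul_eq_zero (B : Matrix (Fin 2) (Fin 2) ℂ) :
    ∃ N : Matrix (Fin 2) (Fin 2) ℂ, N ≠ 0 ∧ N.IsHermitian ∧ N.trace = 0 ∧ (N * B).trace = 0 := by
  let f : ℝ × ℂ →ₗ[ℝ] ℂ :=
    { toFun p := p.1 * (B 0 0 - B 1 1) + p.2 * B 1 0 + star p.2 * B 0 1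
      map_add' p q := by
        simp only [Prod.fst_add, Prod.snd_add, Complex.ofReal_add, star_add]
        ring
      map_smul' r p := by
        simp only [Prod.smul_fst, Prod.smul_snd, Complex.real_smul, smul_eq_mul,
          Complex.ofReal_mul, star_mul', RCLike.star_def, Complex.conj_ofReal, RingHom.id_apply]
        ring }
  have hf : LinearMap.ker f ≠ ⊥ := LinearMap.ker_ne_bot_of_finrank_lt (by simp)
  obtain ⟨⟨x, u⟩, hker, hne⟩ := Submodule.exists_mem_ne_zero_of_ne_bot hf
  refine ⟨!![x, u; star u, -x], fun h ↦ hne ?_, ?_, by simp [trace_fin_two], ?_⟩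
  · have h0 := congrFun₂ h 0 0
    have h1 := congrFun₂ h 0 1
    simp_all
  · ext i j
    fin_cases i <;> fin_cases j <;> simp
  · have hfx : x * (B 0 0 - B 1 1) + u * B 1 0 + star u * B 0 1 = 0 := hker
    rw [← hfx]
    simp only [trace_fin_two, Matrix.mul_apply, Fin.sum_univ_two, of_apply, cons_val_zero,
      cons_val_one]
    ring

lemma exists_unitary_conj_diag_eq (B : Matrix (Fin 2) (Fin 2) ℂ) :
    ∃ W ∈ unitaryGroup (Fin 2) ℂ, (Wᴴ * B * W) 0 0 = (Wᴴ * B * W) 1 1 := by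
  obtain ⟨N, hN0, hN, htr, hNB⟩ := exists_isHermitian_trace_mul_eq_zero B
  let W : Matrix (Fin 2) (Fin 2) ℂ := hN.eigenvectorUnitary
  refine ⟨W, hN.eigenvectorUnitary.2, ?_⟩
  have hspec : N = W * diagonal (fun i ↦ (hN.eigenvalues i : ℂ)) * Wᴴ := hN.spectral_theorem
  have hsum : hN.eigenvalues 1 = -hN.eigenvalues 0 := by
    have := hN.trace_eq_sum_eigenvalues
    rw [htr, Fin.sum_univ_two] at this
    rw [eq_neg_iff_add_eq_zero, add_comm]
    exact Complex.ofReal_eq_zero.1 (by push_cast; exact this.symm)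
  have hne : hN.eigenvalues 0 ≠ 0 := by
    intro h0
    refine hN0 (hN.eigenvalues_eq_zero_iff.1 ?_)
    ext i
    fin_cases i <;> simp [hsum, h0]
  have htrace : (diagonal (fun i ↦ (hN.eigenvalues i : ℂ)) * (Wᴴ * B * W)).trace = 0 := by
    calc _ = ((W * diagonal fun i ↦ (hN.eigenvalues i : ℂ)) * Wᴴ * B).trace := by
          rw [Matrix.mul_assoc Wᴴ, ← Matrix.mul_assoc, trace_mul_comm, Matrix.mul_assoc,
            trace_mul_comm B, ← Matrix.mul_assoc W]
      _ = 0 := by rw [← hspec, hNB]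
  simp only [trace_fin_two, diagonal_mul, hsum] at htrace
  have hne' : (hN.eigenvalues 0 : ℂ) ≠ 0 := by exact_mod_cast hne
  refine mul_left_cancel₀ hne' ?_
  push_cast at htrace
  linear_combination htrace

lemma exists_unitary_isSymm_of_diag_eq :
    ∃ V ∈ unitaryGroup (Fin 2) ℂ, ∀ D : Matrix (Fin 2) (Fin 2) ℂ, D 0 0 = D 1 1 →
      (V * D * Vᴴ).IsSymm := by
  let c : ℂ := ((√2)⁻¹ : ℝ)
  have hc : c * c = 2⁻¹ := by
    rw [← Complex.ofReal_mul, ← mul_inv, Real.mul_self_sqrt zero_le_two]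
    norm_num
  have hstar : !![c, c * Complex.I; c * Complex.I, c]ᴴ =
      !![c, -(c * Complex.I); -(c * Complex.I), c] := by
    ext i j
    fin_cases i <;> fin_cases j <;> simp [c]
  refine ⟨!![c, c * Complex.I; c * Complex.I, c], mem_unitaryGroup_iff.2 ?_, fun D hD ↦ ?_⟩
  · rw [star_eq_conjTranspose, hstar, mul_fin_two, one_fin_two]
    have hdiag : c * c + c * Complex.I * -(c * Complex.I) = 1 := by
      linear_combination 2 * hc - c * c * Complex.I_sq
    rw [hdiag, add_comm (c * Complex.I * -(c * Complex.I)), hdiag]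
    ring_nf
  · rw [hstar, eta_fin_two D, hD, mul_fin_two, mul_fin_two]
    refine IsSymm.ext (Fin.forall_fin_two.2 ⟨Fin.forall_fin_two.2 ⟨rfl, ?_⟩,
      Fin.forall_fin_two.2 ⟨?_, rfl⟩⟩) <;>
      simp only [of_apply, cons_val', cons_val_zero, cons_val_one, cons_val_fin_one]
    · linear_combination c * c * (D 1 0 - D 0 1) * Complex.I_sq
    · linear_combination c * c * (D 0 1 - D 1 0) * Complex.I_sq

lemma exists_unitary_conj_isSymm (B : Matrix (Fin 2) (Fin 2) ℂ) :
    ∃ G ∈ unitaryGroup (Fin 2) ℂ, (G * B * Gᴴ).IsSymm := by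
  obtain ⟨W, hW, hdiag⟩ := exists_unitary_conj_diag_eq B
  obtain ⟨V, hV, hsymm⟩ := exists_unitary_isSymm_of_diag_eq
  refine ⟨V * Wᴴ, mul_mem hV (Unitary.star_mem hW), ?_⟩
  simpa [Matrix.mul_assoc] using hsymm _ hdiag

end TwoByTwo

section TwoQubits

variable {A B C : Matrix (Fin 2) (Fin 2) ℂ}

lemma exists_eq_smul_of_not_posDef (hA : ¬ A.PosDef)
    (h : (hermBlocks A B C).PosSemidef) (h' : (hermBlocks A Bᴴ C).PosSemidef) :
    ∃ z : ℂ, B = z • A := by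
  have hApos : A.PosSemidef := h.submatrix (0, ·)
  obtain rfl | hA0 := eq_or_ne A 0
  · refine ⟨0, ?_⟩
    rw [zero_smul, ← conjTranspose_eq_zero, ext_iff_mulVec]
    intro v
    rw [zero_mulVec, mulVec_eq_zero_of_posSemidef_hermBlocks h (zero_mulVec v)]
  have htr : A.trace ≠ 0 := mt hApos.trace_eq_zero_iff.1 hA0
  have hdet : A.det = 0 := by
    rwa [hApos.posDef_iff_isUnit, isUnit_iff_isUnit_det, isUnit_iff_ne_zero, not_not] at hA
  obtain ⟨v, hv0, hv⟩ := exists_mulVec_eq_zero_iff.2 hdet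
  have hBv : Bᴴ *ᵥ v = 0 := mulVec_eq_zero_of_posSemidef_hermBlocks h hv
  have hBv' : B *ᵥ v = 0 := by
    simpa using mulVec_eq_zero_of_posSemidef_hermBlocks h' hv
  have hAeq := smul_eq_trace_smul_adjugate hv (hApos.1.eq.symm ▸ hv)
  have hBeq := smul_eq_trace_smul_adjugate hBv' hBv
  have hvv : star v ⬝ᵥ v ≠ 0 := mt dotProduct_star_self_eq_zero.1 hv0
  refine ⟨B.trace / A.trace, smul_right_injective _ hvv ?_⟩
  simp only
  rw [hBeq, smul_comm, hAeq, smul_smul, div_mul_cancel₀ _ htr]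

lemma hermBlocks_mem_sepCone_of_not_posDef (hA : ¬ A.PosDef)
    (h : (hermBlocks A B C).PosSemidef) (h' : (hermBlocks A Bᴴ C).PosSemidef) :
    hermBlocks A B C ∈ sepCone (Fin 2) (Fin 2) := by
  obtain ⟨z, rfl⟩ := exists_eq_smul_of_not_posDef hA h h'
  exact hermBlocks_smul_mem_sepCone h

lemma hermBlocks_mem_sepCone_of_isHermitian (hB : B.IsHermitian)
    (h : (hermBlocks A B C).PosSemidef) : hermBlocks A B C ∈ sepCone (Fin 2) (Fin 2) := by
  by_cases hA : A.PosDef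
  · exact hermBlocks_mem_sepCone_of_posDef_of_isHermitian hA hB h
  · exact hermBlocks_mem_sepCone_of_not_posDef hA h (hB.eq.symm ▸ h)

-- Exchanging the two qubits turns symmetric blocks into a Hermitian off-diagonal block.
lemma hermBlocks_mem_sepCone_of_isSymm (hA : A.IsSymm) (hB : B.IsSymm) (hC : C.IsSymm)
    (h : (hermBlocks A B C).PosSemidef) : hermBlocks A B C ∈ sepCone (Fin 2) (Fin 2) := by
  have hswap := h.submatrix (Prod.swap (α := Fin 2) (β := Fin 2))
  have hA' : A.IsHermitian := (h.submatrix (0, ·)).1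
  have hC' : C.IsHermitian := (h.submatrix (1, ·)).1
  suffices (hermBlocks A B C).submatrix Prod.swap Prod.swap ∈ sepCone (Fin 2) (Fin 2) from
    submatrix_swap_mem_sepCone this
  have hblocks := eq_hermBlocks_of_isHermitian hswap.1
  rw [hblocks] at hswap ⊢
  refine hermBlocks_mem_sepCone_of_isHermitian ?_ hswap
  ext i j
  fin_cases i <;> fin_cases j
  · simpa [hermBlocks, hA.apply 0 1] using hA'.apply 1 0
  · simp [hermBlocks, hB.apply 0 1]
  · simp [hermBlocks, hB.apply 0 1]
  · simpa [hermBlocks, hC.apply 0 1] using hC'.apply 1 0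

lemma hermBlocks_one_mem_sepCone_of_im_mul_im_nonpos (hB : B.IsSymm)
    (h : (hermBlocks 1 B C).PosSemidef) (him : ((Bᴴ * B) 0 1).im * (C 0 1).im ≤ 0) :
    hermBlocks 1 B C ∈ sepCone (Fin 2) (Fin 2) := by
  have hC : C.IsHermitian := (h.submatrix (1, ·)).1
  have hCB := posSemidef_hermBlocks_one_iff.1 h
  obtain ⟨s, t, hs, ht, hst, hsymm⟩ :=
    exists_isSymm_between (isHermitian_conjTranspose_mul_self B) hC him
  refine hermBlocks_mem_sepCone_of_posSemidef_sub (D := s • (Bᴴ * B) + t • C)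
    (hermBlocks_mem_sepCone_of_isSymm isSymm_one hB hsymm ?_) ?_
  · rw [posSemidef_hermBlocks_one_iff]
    convert hCB.smul ht using 1
    rw [eq_sub_of_add_eq hst]
    module
  · convert hCB.smul hs using 1
    rw [eq_sub_of_add_eq hst]
    module

lemma hermBlocks_one_mem_sepCone_of_isSymm (hB : B.IsSymm)
    (h : (hermBlocks 1 B C).PosSemidef) (h' : (hermBlocks 1 Bᴴ C).PosSemidef) :
    hermBlocks 1 B C ∈ sepCone (Fin 2) (Fin 2) := by
  rcases le_total (((Bᴴ * B) 0 1).im * (C 0 1).im) 0 with him | him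
  · exact hermBlocks_one_mem_sepCone_of_im_mul_im_nonpos hB h him
  suffices hermBlocks 1 Bᴴ C ∈ sepCone (Fin 2) (Fin 2) by
    simpa [partialTranspose_hermBlocks] using partialTranspose_mem_sepCone this
  refine hermBlocks_one_mem_sepCone_of_im_mul_im_nonpos hB.conjTranspose h' ?_
  have hBt : Bᴴᴴ * Bᴴ = (Bᴴ * B)ᵀ := by
    rw [transpose_mul, hB.eq, hB.conjTranspose.eq, conjTranspose_conjTranspose]
  rw [hBt, transpose_apply, ← (isHermitian_conjTranspose_mul_self B).apply, ← starRingEnd_apply,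
    Complex.conj_im]
  linarith

lemma hermBlocks_mem_sepCone_of_posDef (hA : A.PosDef)
    (h : (hermBlocks A B C).PosSemidef) (h' : (hermBlocks A Bᴴ C).PosSemidef) :
    hermBlocks A B C ∈ sepCone (Fin 2) (Fin 2) := by
  obtain ⟨S, hS, hSA⟩ := exists_isUnit_conj_eq_one hA
  obtain ⟨W, hW, hsymm⟩ := exists_unitary_conj_isSymm (S * B * Sᴴ)
  have hWS : (W * S) * A * (W * S)ᴴ = 1 := by
    rw [conjTranspose_mul, ← Matrix.mul_assoc, Matrix.mul_assoc W, Matrix.mul_assoc W, hSA,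
      Matrix.mul_one]
    exact mem_unitaryGroup_iff.1 hW
  have hG : IsUnit (W * S) := (Unitary.isUnit_coe (U := ⟨W, hW⟩)).mul hS
  generalize hGdef : W * S = G at hG hWS
  have hsymm' : (G * B * Gᴴ).IsSymm := by
    simpa [← hGdef, Matrix.mul_assoc] using hsymm
  have hstar : (G * B * Gᴴ)ᴴ = G * Bᴴ * Gᴴ := by simp [Matrix.mul_assoc]
  have hconj := h.mul_mul_conjTranspose_same ((1 : Matrix (Fin 2) (Fin 2) ℂ) ⊗ₖ G)
  have hconj' := h'.mul_mul_conjTranspose_same ((1 : Matrix (Fin 2) (Fin 2) ℂ) ⊗ₖ G)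
  rw [hermBlocks_conj, hWS] at hconj hconj'
  refine mem_sepCone_of_conj hG ?_
  rw [hermBlocks_conj, hWS]
  exact hermBlocks_one_mem_sepCone_of_isSymm hsymm' hconj (hstar ▸ hconj')

theorem mem_sepCone_iff_posSemidef_partialTranspose {ρ : Matrix (Fin 2 × Fin 2) (Fin 2 × Fin 2) ℂ}
    (hρ : ρ.PosSemidef) :
    ρ ∈ sepCone (Fin 2) (Fin 2) ↔ (partialTranspose ρ).PosSemidef := by
  refine ⟨fun h ↦ posSemidef_of_mem_sepCone (partialTranspose_mem_sepCone h), fun h ↦ ?_⟩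
  obtain ⟨A, B, C, rfl⟩ : ∃ A B C, ρ = hermBlocks A B C :=
    ⟨_, _, _, eq_hermBlocks_of_isHermitian hρ.1⟩
  rw [partialTranspose_hermBlocks] at h
  by_cases hA : A.PosDef
  · exact hermBlocks_mem_sepCone_of_posDef hA hρ h
  · exact hermBlocks_mem_sepCone_of_not_posDef hA hρ h

end TwoQubits

/-- The reduction criterion for two qubits: `ρ` is separable iff `ρ¹ ⊗ I₂ − ρ` is
positive semidefinite. -/
theorem stmt13 (ρ : Matrix (Fin 2 × Fin 2) (Fin 2 × Fin 2) ℂ) (hρ : IsDensity ρ) :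
    Separable ρ ↔
      ((ptrace2 ρ) ⊗ₖ (1 : Matrix (Fin 2) (Fin 2) ℂ) - ρ).PosSemidef := by
  rw [separable_iff_mem_sepCone hρ.2, mem_sepCone_iff_posSemidef_partialTranspose hρ.1,
    posSemidef_reduction_iff]
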